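/- Fix a real σ > 0. Then the real-valued function a ↦ Z(σ,a) (for σ ≠ 1) has strictly negative derivative with respect to a at every a ∈ (0, 1/2), namely ∂Z(σ,a)/∂a = −σ·Y(σ+1,a) < 0; likewise a ↦ P(σ,a) has strictly negative derivative at every a ∈ (0, 1/2), namely ∂P(σ,a)/∂a = −2π·O(σ−1,a) < 0. In particular both a ↦ Z(σ,a) and a ↦ P(σ,a) are strictly decreasing on (0, 1/2). -/

import Mathlib

open HurwitzZeta Complex

/-- `Z(s,a) = ζ(s,a) + ζ(s,1−a)`. -/
noncomputable def Zf (a : ℝ) : ℂ → ℂ :=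
  fun s => hurwitzZeta a s + hurwitzZeta (1 - a : ℝ) s

/-- `P(s,a) = Li_s(e^{2πia}) + Li_s(e^{2πi(1−a)})`. -/
noncomputable def Pf (a : ℝ) : ℂ → ℂ :=
  fun s => expZeta a s + expZeta (1 - a : ℝ) s

/-- `Y(s,a) = ζ(s,a) − ζ(s,1−a)`. -/
noncomputable def Yf (a : ℝ) : ℂ → ℂ :=
  fun s => hurwitzZeta a s - hurwitzZeta (1 - a : ℝ) s

/-- `O(s,a) = −i(Li_s(e^{2πia}) − Li_s(e^{2πi(1−a)}))`. -/
noncomputable def Og (a : ℝ) : ℂ → ℂ :=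
  fun s => -Complex.I * (expZeta a s - expZeta (1 - a : ℝ) s)


noncomputable def K1 (θ t : ℝ) : ℝ := (Real.cos θ - Real.exp (-t)) / (2 * (Real.cosh t - Real.cos θ))
noncomputable def K2 (θ t : ℝ) : ℝ :=
  Real.sin θ * Real.sinh t / (2 * (Real.cosh t - Real.cos θ) ^ 2)

lemma cosh_sub_lower {c θ t : ℝ} (hc : 0 ≤ c) (h : Real.cos θ ≤ c) :
    (1 - c) * Real.cosh t ≤ Real.cosh t - Real.cos θ := by
  nlinarith [Real.one_le_cosh t]

lemma exp_le_two_cosh (t : ℝ) : Real.exp t / 2 ≤ Real.cosh t := by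
  rw [Real.cosh_eq]; linarith [Real.exp_pos (-t)]

lemma K1_bound {c θ t : ℝ} (hc : 0 ≤ c) (hc1 : c < 1) (h : Real.cos θ ≤ c) (ht : 0 < t) :
    |K1 θ t| ≤ 2 / (1 - c) * Real.exp (-t) := by
  have h1 := cosh_sub_lower (t := t) hc h
  have h2 := exp_le_two_cosh t
  have h3 : (1 - c) * (Real.exp t / 2) ≤ Real.cosh t - Real.cos θ :=
    (mul_le_mul_of_nonneg_left h2 (by linarith)).trans h1
  have h4 : 0 < (1 - c) * (Real.exp t / 2) := by
    have := Real.exp_pos t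
    have : 0 < 1 - c := by linarith
    positivity
  have h5 : Real.exp (-t) ≤ 1 := Real.exp_le_one_iff.mpr (by linarith)
  have h6 : |Real.cos θ - Real.exp (-t)| ≤ 2 := by
    rw [abs_le]; constructor <;> linarith [Real.neg_one_le_cos θ, Real.cos_le_one θ, Real.exp_pos (-t)]
  rw [K1, abs_div, abs_of_pos (show 0 < 2 * (Real.cosh t - Real.cos θ) by linarith)]
  calc _ ≤ 2 / (2 * ((1 - c) * (Real.exp t / 2))) := by gcongr
    _ = _ := by
      rw [Real.exp_neg]; have := Real.exp_pos t
      have : 1 - c ≠ 0 := by linarith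
      field_simp

lemma K2_bound {c θ t : ℝ} (hc : 0 ≤ c) (hc1 : c < 1) (h : Real.cos θ ≤ c) (ht : 0 < t) :
    |K2 θ t| ≤ 1 / (1 - c) ^ 2 * Real.exp (-t) := by
  have h1 := cosh_sub_lower (t := t) hc h
  have h2 := exp_le_two_cosh t
  have hC := Real.cosh_pos t
  have hc2 : 0 < 1 - c := by linarith
  have h4 : 0 < (1 - c) * Real.cosh t := by positivity
  have h6 : |Real.sin θ * Real.sinh t| ≤ Real.cosh t := by
    rw [abs_mul, abs_of_pos (Real.sinh_pos_iff.mpr ht)]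
    have := Real.abs_sin_le_one θ
    have := Real.sinh_lt_cosh t
    have := Real.sinh_pos_iff.mpr ht
    nlinarith
  rw [K2, abs_div, abs_of_pos (show 0 < 2 * (Real.cosh t - Real.cos θ) ^ 2 by
    have : 0 < Real.cosh t - Real.cos θ := by linarith
    positivity)]
  calc _ ≤ Real.cosh t / (2 * ((1 - c) * Real.cosh t) ^ 2) := by gcongr
    _ = 1 / (1 - c) ^ 2 * (1 / (2 * Real.cosh t)) := by
      field_simp
    _ ≤ _ := by
      rw [Real.exp_neg, ← one_div]
      gcongr
      linarith

lemma hasDerivAt_K1 {θ t : ℝ} (h : Real.cosh t - Real.cos θ ≠ 0) :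
    HasDerivAt (fun x => K1 x t) (-K2 θ t) θ := by
  have := ((Real.hasDerivAt_cos θ).sub_const (Real.exp (-t))).div
    (((Real.hasDerivAt_cos θ).const_sub (Real.cosh t)).const_mul 2) (by simpa using h)
  refine this.congr_deriv ?_
  rw [K2]
  have : Real.exp (-t) = Real.cosh t - Real.sinh t := (Real.cosh_sub_sinh t).symm
  rw [this]
  field_simp
  ring

lemma D_pos {θ t : ℝ} (ht : 0 < t) : 0 < Real.cosh t - Real.cos θ := by
  have := Real.one_lt_cosh.mpr ht.ne'
  linarith [Real.cos_le_one θ]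

lemma K1_cont (θ : ℝ) : ContinuousOn (fun t => (K1 θ t : ℂ)) (Set.Ioi 0) := by
  apply Complex.continuous_ofReal.comp_continuousOn
  unfold K1
  apply ContinuousOn.div (by fun_prop) (Continuous.continuousOn (by have := Real.continuous_cosh; fun_prop))
  intro t ht
  have := D_pos (θ := θ) ht
  positivity

lemma K2_cont (θ : ℝ) : ContinuousOn (fun t => (K2 θ t : ℂ)) (Set.Ioi 0) := by
  apply Complex.continuous_ofReal.comp_continuousOn
  unfold K2
  have := Real.continuous_cosh
  have := Real.continuous_sinh
  apply ContinuousOn.div (Continuous.continuousOn (by fun_prop)) (Continuous.continuousOn (by fun_prop))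
  intro t ht
  have := D_pos (θ := θ) ht
  positivity

lemma mellin_ok {f : ℝ → ℂ} (hf : ContinuousOn f (Set.Ioi 0)) {M : ℝ}
    (hM : ∀ t : ℝ, 0 < t → ‖f t‖ ≤ M * Real.exp (-t)) {s : ℂ} (hs : 0 < s.re) :
    MellinConvergent f s ∧ DifferentiableAt ℂ (mellin f) s := by
  have h1 : MeasureTheory.LocallyIntegrableOn f (Set.Ioi 0) :=
    hf.locallyIntegrableOn measurableSet_Ioi
  have h2 : f =O[Filter.atTop] fun t => Real.exp (-1 * t) := by
    apply Asymptotics.IsBigO.of_bound M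
    filter_upwards [Filter.eventually_gt_atTop 0] with t ht
    simpa using hM t ht
  have h3 : f =O[nhdsWithin 0 (Set.Ioi 0)] fun t : ℝ => t ^ (-(0 : ℝ)) := by
    apply Asymptotics.IsBigO.of_bound |M|
    filter_upwards [self_mem_nhdsWithin] with t ht
    have h5 : Real.exp (-t) ≤ 1 := Real.exp_le_one_iff.mpr (by linarith [Set.mem_Ioi.mp ht])
    have := hM t ht
    have h6 := le_abs_self M
    have h7 := abs_nonneg M
    have h8 := Real.exp_pos (-t)
    simp only [neg_zero, Real.rpow_zero, norm_one, mul_one]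
    nlinarith
  exact ⟨mellinConvergent_of_isBigO_rpow_exp one_pos h1 h2 h3 hs,
    mellin_differentiableAt_of_isBigO_rpow_exp one_pos h1 h2 h3 hs⟩

lemma geom_facts (θ : ℝ) {t : ℝ} (ht : 0 < t) : ∃ w : ℂ, ‖w‖ < 1 ∧
    w = (Real.exp (-t) * Real.cos θ : ℝ) + (Real.exp (-t) * Real.sin θ : ℝ) * I ∧
    ∀ n : ℕ, w ^ n = (Real.cos (θ * n) * Real.exp (-n * t) : ℝ) +
      (Real.sin (θ * n) * Real.exp (-n * t) : ℝ) * I := by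
  refine ⟨Complex.exp (-t + θ * I), ?_, ?_, ?_⟩
  · rw [Complex.norm_exp]; simpa using ht
  · rw [Complex.exp_add, Complex.exp_mul_I]; push_cast; ring
  · intro n
    rw [← Complex.exp_nat_mul, show (n : ℂ) * (-t + θ * I) = (-n * t) + (θ * n) * I by ring,
      Complex.exp_add, Complex.exp_mul_I]
    push_cast; ring

lemma K_alg (θ : ℝ) {t : ℝ} (ht : 0 < t) : ∃ E : ℝ, 0 < E ∧
    E = 1 + Real.exp (-t) ^ 2 - 2 * Real.exp (-t) * Real.cos θ ∧
    K1 θ t = (Real.cos θ - Real.exp (-t)) * Real.exp (-t) / E ∧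
    K2 θ t = Real.sin θ * (1 - Real.exp (-t) ^ 2) * Real.exp (-t) / E ^ 2 := by
  have hD := D_pos (θ := θ) ht
  have e := Real.exp_pos (-t)
  have hco : Real.cosh t = (1 / Real.exp (-t) + Real.exp (-t)) / 2 := by
    rw [Real.cosh_eq, Real.exp_neg]; simp
  have hsi : Real.sinh t = (1 / Real.exp (-t) - Real.exp (-t)) / 2 := by
    rw [Real.sinh_eq, Real.exp_neg]; simp
  rw [K1, K2, hsi]
  rw [hco] at hD ⊢
  generalize Real.exp (-t) = q at *
  have e1 : (1 / q + q) / 2 - Real.cos θ = (1 + q^2 - 2 * q * Real.cos θ) / (2 * q) := by field_simp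
  have hE : 0 < 1 + q^2 - 2 * q * Real.cos θ := by
    rw [e1] at hD
    exact (div_pos_iff_of_pos_right (by positivity)).mp hD
  rw [e1]
  refine ⟨_, hE, rfl, ?_, ?_⟩
  · generalize 1 + q^2 - 2 * q * Real.cos θ = E at *
    field_simp
  · generalize 1 + q^2 - 2 * q * Real.cos θ = E at *
    field_simp

lemma K1_sum (θ : ℝ) {t : ℝ} (ht : 0 < t) :
    HasSum (fun n : ℕ => (if n = 0 then 0 else Real.cos (θ * n)) * Real.exp (-n * t)) (K1 θ t) := by
  obtain ⟨w, hw1, hw2, hw3⟩ := geom_facts θ ht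
  have h := Complex.hasSum_re (hasSum_geometric_of_norm_lt_one hw1)
  have h2 := h.sub (hasSum_ite_eq 0 (1 : ℝ))
  convert! h2 using 1
  · ext n
    rw [hw3]
    split_ifs with hn
    · simp [hn]
    · simp only [Complex.add_re, Complex.mul_re, Complex.ofReal_re, Complex.ofReal_im, Complex.I_re, Complex.I_im]
      ring
  · obtain ⟨E, hE, hE', h1, -⟩ := K_alg θ ht
    have hs := Real.sin_sq_add_cos_sq θ
    have hN : Complex.normSq (1 - w) = E := by
      rw [Complex.normSq_apply, hw2, hE']
      simp only [Complex.sub_re, Complex.sub_im, Complex.add_re, Complex.add_im, Complex.mul_re, Complex.mul_im, Complex.ofReal_re, Complex.ofReal_im, Complex.I_re, Complex.I_im, Complex.one_re, Complex.one_im]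
      linear_combination Real.exp (-t) ^ 2 * hs
    have hr : (1 - w).re = 1 - Real.exp (-t) * Real.cos θ := by
      rw [hw2]
      simp only [Complex.sub_re, Complex.add_re, Complex.mul_re, Complex.ofReal_re, Complex.ofReal_im, Complex.I_re, Complex.I_im, Complex.one_re]
      ring
    rw [h1, Complex.inv_re, hN, hr, div_sub_one hE.ne']
    congr 1
    rw [hE']
    ring

lemma K2_sum (θ : ℝ) {t : ℝ} (ht : 0 < t) :
    HasSum (fun n : ℕ => (n * Real.sin (θ * n)) * Real.exp (-n * t)) (K2 θ t) := by
  obtain ⟨w, hw1, hw2, hw3⟩ := geom_facts θ ht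
  have h := Complex.hasSum_im (hasSum_coe_mul_geometric_of_norm_lt_one hw1)
  convert! h using 1
  · ext n
    rw [hw3]
    simp only [Complex.add_re, Complex.add_im, Complex.mul_re, Complex.mul_im, Complex.ofReal_re, Complex.ofReal_im, Complex.I_re, Complex.I_im, Complex.natCast_re, Complex.natCast_im]
    ring
  · obtain ⟨E, hE, hE', -, h1⟩ := K_alg θ ht
    have hs := Real.sin_sq_add_cos_sq θ
    have hN : Complex.normSq ((1 - w)^2) = E^2 := by
      rw [map_pow, Complex.normSq_apply, hw2, hE']
      simp only [Complex.sub_re, Complex.sub_im, Complex.add_re, Complex.add_im, Complex.mul_re, Complex.mul_im, Complex.ofReal_re, Complex.ofReal_im, Complex.I_re, Complex.I_im, Complex.one_re, Complex.one_im]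
      congr 1
      linear_combination Real.exp (-t) ^ 2 * hs
    rw [h1, Complex.div_im, hN, ← sub_div]
    congr 1
    rw [hw2]
    simp only [pow_two, Complex.sub_re, Complex.sub_im, Complex.add_re, Complex.add_im, Complex.mul_re, Complex.mul_im, Complex.ofReal_re, Complex.ofReal_im, Complex.I_re, Complex.I_im, Complex.one_re, Complex.one_im]
    generalize Real.sin θ = S at *
    generalize Real.cos θ = C at *
    generalize Real.exp (-t) = q at *
    linear_combination (S * q ^ 3) * hs


lemma cos_two_pi_lt_one {a : ℝ} (ha : a ∈ Set.Ioo (0 : ℝ) 1) : Real.cos (2 * Real.pi * a) < 1 := by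
  have hpi := Real.pi_pos
  have : Real.cos (2 * Real.pi * a) = 1 - 2 * Real.sin (Real.pi * a) ^ 2 := by
    rw [show 2 * Real.pi * a = 2 * (Real.pi * a) by ring, Real.cos_two_mul, Real.cos_sq']; ring
  have h2 : 0 < Real.sin (Real.pi * a) :=
    Real.sin_pos_of_pos_of_lt_pi (mul_pos hpi ha.1) (by nlinarith [ha.2])
  rw [this]
  nlinarith

lemma exists_c {a : ℝ} (ha : a ∈ Set.Ioo (0 : ℝ) 1) :
    ∃ c : ℝ, 0 ≤ c ∧ c < 1 ∧ Real.cos (2 * Real.pi * a) < c := by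
  have := cos_two_pi_lt_one ha
  have := Real.neg_one_le_cos (2 * Real.pi * a)
  exact ⟨(1 + Real.cos (2 * Real.pi * a)) / 2, by linarith, by linarith, by linarith⟩

lemma coe_ne_zero {a : ℝ} (ha : a ∈ Set.Ioo (0 : ℝ) 1) : (a : UnitAddCircle) ≠ 0 := by
  intro h
  rw [AddCircle.coe_eq_zero_iff_of_mem_Ico (a := a) (p := 1) (by constructor <;> linarith [ha.1, ha.2])] at h
  exact ha.1.ne' h

lemma K1_ok {a : ℝ} (ha : a ∈ Set.Ioo (0 : ℝ) 1) {s : ℂ} (hs : 0 < s.re) :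
    MellinConvergent (fun t => (K1 (2 * Real.pi * a) t : ℂ)) s ∧
    DifferentiableAt ℂ (mellin (fun t => (K1 (2 * Real.pi * a) t : ℂ))) s := by
  obtain ⟨c, h0, h1, h2⟩ := exists_c ha
  refine mellin_ok (K1_cont _) (M := 2 / (1 - c)) ?_ hs
  intro t ht
  rw [Complex.norm_real]
  exact K1_bound h0 h1 h2.le ht

lemma K2_ok {a : ℝ} (ha : a ∈ Set.Ioo (0 : ℝ) 1) {s : ℂ} (hs : 0 < s.re) :
    MellinConvergent (fun t => (K2 (2 * Real.pi * a) t : ℂ)) s ∧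
    DifferentiableAt ℂ (mellin (fun t => (K2 (2 * Real.pi * a) t : ℂ))) s := by
  obtain ⟨c, h0, h1, h2⟩ := exists_c ha
  refine mellin_ok (K2_cont _) (M := 1 / (1 - c) ^ 2) ?_ hs
  intro t ht
  rw [Complex.norm_real]
  exact K2_bound h0 h1 h2.le ht

lemma eq_of_half_plane {f g : ℂ → ℂ} (hf : ∀ s : ℂ, 0 < s.re → DifferentiableAt ℂ f s)
    (hg : ∀ s : ℂ, 0 < s.re → DifferentiableAt ℂ g s)
    (h : ∀ s : ℂ, 2 < s.re → f s = g s) {s : ℂ} (hs : 0 < s.re) : f s = g s := by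
  have hU : IsOpen {s : ℂ | 0 < s.re} := isOpen_lt continuous_const Complex.continuous_re
  have hV : IsOpen {s : ℂ | 2 < s.re} := isOpen_lt continuous_const Complex.continuous_re
  refine AnalyticOnNhd.eqOn_of_preconnected_of_eventuallyEq (U := {s : ℂ | 0 < s.re}) (z₀ := 3)
    (DifferentiableOn.analyticOnNhd (fun z hz => (hf z hz).differentiableWithinAt) hU)
    (DifferentiableOn.analyticOnNhd (fun z hz => (hg z hz).differentiableWithinAt) hU)
    (convex_halfSpace_re_gt 0).isPreconnected (by simp) ?_ hs
  filter_upwards [hV.mem_nhds (show (3 : ℂ) ∈ _ by norm_num)] with z hz using h z hz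

lemma Gamma_diff {s : ℂ} (hs : 0 < s.re) : DifferentiableAt ℂ Complex.Gamma s := by
  apply Complex.differentiableAt_Gamma
  intro m h
  rw [h] at hs
  simp at hs
  exact absurd hs (not_lt.mpr (Nat.cast_nonneg m))

lemma mellin_K1 {a : ℝ} (ha : a ∈ Set.Ioo (0 : ℝ) 1) {s : ℂ} (hs : 0 < s.re) :
    mellin (fun t => (K1 (2 * Real.pi * a) t : ℂ)) s = Complex.Gamma s * cosZeta a s := by
  refine eq_of_half_plane (f := mellin (fun t => (K1 (2 * Real.pi * a) t : ℂ)))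
    (g := fun s => Complex.Gamma s * cosZeta a s) (fun s hs => (K1_ok ha hs).2)
    (fun s hs => (Gamma_diff hs).mul (differentiable_cosZeta_of_ne_zero (coe_ne_zero ha) s)) ?_ hs
  intro s hs
  have hs1 : 1 < s.re := by linarith
  have h0 : s ≠ 0 := by rintro rfl; simp at hs; linarith
  have key := hasSum_mellin (ι := ℕ)
    (a := fun n => (((if n = 0 then 0 else Real.cos (2 * Real.pi * a * n)) : ℝ) : ℂ))
    (p := fun n => (n : ℝ)) (F := fun t => (K1 (2 * Real.pi * a) t : ℂ)) (s := s) ?_ (by linarith) ?_ ?_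
  · refine key.unique (((hasSum_nat_cosZeta a hs1).mul_left (Complex.Gamma s)).congr_fun ?_)
    intro n
    by_cases hn : n = 0
    · simp [hn, h0]
    · simp [hn, mul_div_assoc]
  · intro n
    by_cases hn : n = 0
    · simp [hn]
    · right; positivity
  · intro t ht
    have := K1_sum (2 * Real.pi * a) ht
    have := Complex.hasSum_ofReal.mpr this
    simpa only [Complex.ofReal_mul] using this
  · refine Summable.of_nonneg_of_le (fun n => by positivity) (fun n => ?_)
      (Real.summable_one_div_nat_rpow.mpr hs1)
    gcongr
    rw [Complex.norm_real]
    split_ifs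
    · simp
    · exact Real.abs_cos_le_one _

lemma mellin_K2 {a : ℝ} (ha : a ∈ Set.Ioo (0 : ℝ) 1) {s : ℂ} (hs : 0 < s.re) :
    mellin (fun t => (K2 (2 * Real.pi * a) t : ℂ)) s = Complex.Gamma s * sinZeta a (s - 1) := by
  refine eq_of_half_plane (f := mellin (fun t => (K2 (2 * Real.pi * a) t : ℂ)))
    (g := fun s => Complex.Gamma s * sinZeta a (s - 1)) (fun s hs => (K2_ok ha hs).2)
    (fun s hs => (Gamma_diff hs).mul ?_) ?_ hs
  · exact (differentiableAt_sinZeta (a : UnitAddCircle)).differentiableAt.comp s (by fun_prop)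
  intro s hs
  have hs1 : 1 < (s - 1).re := by simp; linarith
  have h0 : s ≠ 0 := by rintro rfl; simp at hs; linarith
  have key := hasSum_mellin (ι := ℕ)
    (a := fun n => ((n * Real.sin (2 * Real.pi * a * n) : ℝ) : ℂ))
    (p := fun n => (n : ℝ)) (F := fun t => (K2 (2 * Real.pi * a) t : ℂ)) (s := s) ?_ (by linarith) ?_ ?_
  · refine key.unique (((hasSum_nat_sinZeta a hs1).mul_left (Complex.Gamma s)).congr_fun ?_)
    intro n
    by_cases hn : n = 0
    · simp [hn]
    · have hn' : (n : ℂ) ≠ 0 := by exact_mod_cast hn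
      rw [Complex.cpow_sub _ _ hn', Complex.cpow_one]
      have : (n : ℂ) ^ s ≠ 0 := by simp [hn, Complex.cpow_eq_zero_iff]
      push_cast
      field_simp
  · intro n
    by_cases hn : n = 0
    · simp [hn]
    · right; positivity
  · intro t ht
    have := K2_sum (2 * Real.pi * a) ht
    have := Complex.hasSum_ofReal.mpr this
    simpa only [Complex.ofReal_mul] using this
  · refine Summable.of_nonneg_of_le (fun n => by positivity) (fun n => ?_)
      ((Real.summable_one_div_nat_rpow (p := s.re - 1)).mpr (by linarith))
    by_cases hn : n = 0
    · simp [hn]; positivity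
    have hn' : (0 : ℝ) < n := by positivity
    rw [Real.rpow_sub_one hn'.ne', one_div_div]
    gcongr
    rw [Complex.norm_real, norm_mul]
    have := Real.abs_sin_le_one (2 * Real.pi * a * n)
    simp only [Real.norm_eq_abs, Nat.abs_cast]
    nlinarith

lemma sinZeta_pos {a : ℝ} (ha : a ∈ Set.Ioo (0 : ℝ) (1 / 2)) {σ : ℝ} (hσ : 0 < σ) :
    0 < (sinZeta a ((σ : ℂ) - 1)).re := by
  have ha' : a ∈ Set.Ioo (0 : ℝ) 1 := ⟨ha.1, by linarith [ha.2]⟩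
  have hpi := Real.pi_pos
  have h := mellin_K2 ha' (s := σ) (by simpa using hσ)
  have hc := (K2_ok ha' (s := σ) (by simpa using hσ)).1
  have e : ∀ t ∈ Set.Ioi (0 : ℝ), ((t : ℂ) ^ ((σ : ℂ) - 1)) • (K2 (2 * Real.pi * a) t : ℂ) =
      ((t ^ (σ - 1) * K2 (2 * Real.pi * a) t : ℝ) : ℂ) := by
    intro t ht
    rw [smul_eq_mul, Complex.ofReal_mul, Complex.ofReal_cpow (le_of_lt ht)]
    push_cast; rfl
  rw [mellin, MeasureTheory.setIntegral_congr_fun measurableSet_Ioi e, integral_complex_ofReal,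
    Complex.Gamma_ofReal] at h
  have hr := congrArg Complex.re h
  rw [Complex.re_ofReal_mul, Complex.ofReal_re] at hr
  have hint : MeasureTheory.IntegrableOn (fun t => t ^ (σ - 1) * K2 (2 * Real.pi * a) t) (Set.Ioi 0) := by
    rw [MellinConvergent, MeasureTheory.integrableOn_congr_fun e measurableSet_Ioi] at hc
    exact MeasureTheory.Integrable.re hc
  have hp : ∀ t ∈ Set.Ioi (0 : ℝ), 0 < t ^ (σ - 1) * K2 (2 * Real.pi * a) t := by
    intro t ht
    apply mul_pos (Real.rpow_pos_of_pos ht _)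
    have h1 : 0 < Real.sin (2 * Real.pi * a) :=
      Real.sin_pos_of_pos_of_lt_pi (by have := ha.1; positivity) (by nlinarith [ha.2])
    have h2 := Real.sinh_pos_iff.mpr ht
    have h3 := D_pos (θ := 2 * Real.pi * a) ht
    unfold K2
    positivity
  have hpos : 0 < ∫ t in Set.Ioi (0 : ℝ), t ^ (σ - 1) * K2 (2 * Real.pi * a) t := by
    rw [MeasureTheory.setIntegral_pos_iff_support_of_nonneg_ae _ hint]
    · rw [Set.inter_eq_right.mpr]
      · simp
      · intro t ht; exact (hp t ht).ne'
    · filter_upwards [MeasureTheory.ae_restrict_mem measurableSet_Ioi] with t ht using (hp t ht).le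
  have hG := Real.Gamma_pos_of_pos hσ
  rw [hr] at hpos
  exact pos_of_mul_pos_right hpos hG.le

lemma hasDerivAt_cosZeta {a : ℝ} (ha : a ∈ Set.Ioo (0 : ℝ) 1) {σ : ℝ} (hσ : 0 < σ) :
    HasDerivAt (fun b : ℝ => cosZeta b (σ : ℂ)) (-(2 * Real.pi) * sinZeta a ((σ : ℂ) - 1)) a := by
  obtain ⟨c, h0, h1, h2⟩ := exists_c ha
  have hσ' : 0 < (σ : ℂ).re := by simpa using hσ
  have hmain := hasDerivAt_integral_of_dominated_loc_of_deriv_le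
    (μ := MeasureTheory.volume.restrict (Set.Ioi (0 : ℝ)))
    (F := fun (b : ℝ) (t : ℝ) => ((t : ℂ) ^ ((σ : ℂ) - 1)) • (K1 (2 * Real.pi * b) t : ℂ))
    (F' := fun (b : ℝ) (t : ℝ) => ((t : ℂ) ^ ((σ : ℂ) - 1)) • ((-(2 * Real.pi) * K2 (2 * Real.pi * b) t : ℝ) : ℂ))
    (x₀ := a) (s := {b : ℝ | Real.cos (2 * Real.pi * b) < c} ∩ Set.Ioo 0 1)
    (bound := fun t => 2 * Real.pi * (1 / (1 - c) ^ 2) * (Real.exp (-t) * t ^ (σ - 1)))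
    ?_ ?_ ?_ ?_ ?_ ?_ ?_
  · have hd := hmain.2
    have e1 : (fun b : ℝ => cosZeta b (σ : ℂ)) =ᶠ[nhds a] fun b =>
        (Complex.Gamma σ)⁻¹ * ∫ t in Set.Ioi (0 : ℝ), ((t : ℂ) ^ ((σ : ℂ) - 1)) • (K1 (2 * Real.pi * b) t : ℂ) := by
      filter_upwards [isOpen_Ioo.mem_nhds ha] with b hb
      have := mellin_K1 hb hσ'
      rw [mellin] at this
      rw [this, inv_mul_cancel_left₀ (Complex.Gamma_ne_zero_of_re_pos hσ')]
    refine ((hd.const_mul (Complex.Gamma σ)⁻¹).congr_of_eventuallyEq e1).congr_deriv ?_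
    have := mellin_K2 ha hσ'
    rw [mellin] at this
    have e2 : (∫ t in Set.Ioi (0 : ℝ), ((t : ℂ) ^ ((σ : ℂ) - 1)) • ((-(2 * Real.pi) * K2 (2 * Real.pi * a) t : ℝ) : ℂ))
        = -(2 * Real.pi) * ∫ t in Set.Ioi (0 : ℝ), ((t : ℂ) ^ ((σ : ℂ) - 1)) • (K2 (2 * Real.pi * a) t : ℂ) := by
      rw [← MeasureTheory.integral_const_mul]
      congr 1
      ext t
      simp only [smul_eq_mul]
      push_cast
      ring
    rw [e2, this]
    have := Complex.Gamma_ne_zero_of_re_pos hσ'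
    field_simp
  · refine Filter.inter_mem ?_ (isOpen_Ioo.mem_nhds ha)
    exact (isOpen_lt (by fun_prop) continuous_const).mem_nhds h2
  · filter_upwards [isOpen_Ioo.mem_nhds ha] with b hb
    exact ((K1_ok hb hσ').1).aestronglyMeasurable
  · exact (K1_ok ha hσ').1
  · have := (((K2_ok ha hσ').1).aestronglyMeasurable).const_mul (-(2 * Real.pi) : ℂ)
    refine this.congr (Filter.Eventually.of_forall fun t => ?_)
    simp only [smul_eq_mul]
    push_cast
    ring
  · filter_upwards [MeasureTheory.ae_restrict_mem measurableSet_Ioi] with t ht b hb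
    have hK := K2_bound h0 h1 (le_of_lt hb.1) ht
    rw [norm_smul, Complex.norm_cpow_eq_rpow_re_of_pos ht, Complex.norm_real, norm_mul]
    simp only [Complex.sub_re, Complex.ofReal_re, Complex.one_re, Real.norm_eq_abs, abs_neg]
    rw [abs_of_pos Real.two_pi_pos]
    have := Real.rpow_pos_of_pos ht (σ - 1)
    have := Real.pi_pos
    calc _ ≤ t ^ (σ - 1) * (2 * Real.pi * (1 / (1 - c) ^ 2 * Real.exp (-t))) := by gcongr
      _ = _ := by ring
  · exact (Real.GammaIntegral_convergent hσ).const_mul _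
  · filter_upwards [MeasureTheory.ae_restrict_mem measurableSet_Ioi] with t ht b hb
    have hk := hasDerivAt_K1 (θ := 2 * Real.pi * b) (D_pos ht).ne'
    have hl : HasDerivAt (fun b : ℝ => 2 * Real.pi * b) (2 * Real.pi) b := by
      simpa using (hasDerivAt_id b).const_mul (2 * Real.pi)
    have h3 := (hk.comp b hl).ofReal_comp
    refine (h3.const_smul ((t : ℂ) ^ ((σ : ℂ) - 1))).congr_deriv ?_
    congr 2
    ring


lemma hurwitz_term {x σ : ℝ} (hx : 0 < x) : (1 : ℂ) / (x : ℂ) ^ (σ : ℂ) = ((x ^ (-σ) : ℝ) : ℂ) := by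
  rw [Real.rpow_neg hx.le, Complex.ofReal_inv, Complex.ofReal_cpow hx.le, one_div]

lemma hasSum_even {a : ℝ} (ha : a ∈ Set.Ioo (0 : ℝ) 1) {σ : ℝ} (hσ : 1 < σ) :
    HasSum (fun n : ℕ => ((((n + a) ^ (-σ) + (n + 1 - a) ^ (-σ)) / 2 : ℝ) : ℂ))
      (hurwitzZetaEven a (σ : ℂ)) := by
  refine (hasSum_nat_hurwitzZetaEven_of_mem_Icc (Set.Ioo_subset_Icc_self ha)
    (s := σ) (by simpa using hσ)).congr_fun fun n => ?_
  have hn : (0 : ℝ) ≤ n := Nat.cast_nonneg n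
  have h1 := hurwitz_term (x := n + a) (σ := σ) (by linarith [ha.1])
  have h2 := hurwitz_term (x := n + 1 - a) (σ := σ) (by linarith [ha.2])
  push_cast at h1 h2 ⊢
  rw [h1, h2]

lemma hasSum_odd {a : ℝ} (ha : a ∈ Set.Ioo (0 : ℝ) 1) {σ : ℝ} (hσ : 1 < σ) :
    HasSum (fun n : ℕ => ((((n + a) ^ (-σ) - (n + 1 - a) ^ (-σ)) / 2 : ℝ) : ℂ))
      (hurwitzZetaOdd a (σ : ℂ)) := by
  refine (hasSum_nat_hurwitzZetaOdd_of_mem_Icc (Set.Ioo_subset_Icc_self ha)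
    (s := σ) (by simpa using hσ)).congr_fun fun n => ?_
  have hn : (0 : ℝ) ≤ n := Nat.cast_nonneg n
  have h1 := hurwitz_term (x := n + a) (σ := σ) (by linarith [ha.1])
  have h2 := hurwitz_term (x := n + 1 - a) (σ := σ) (by linarith [ha.2])
  push_cast at h1 h2 ⊢
  rw [h1, h2]

lemma odd_pos {a : ℝ} (ha : a ∈ Set.Ioo (0 : ℝ) (1 / 2)) {σ : ℝ} (hσ : 1 < σ) :
    0 < (hurwitzZetaOdd a (σ : ℂ)).re := by
  have ha' : a ∈ Set.Ioo (0 : ℝ) 1 := ⟨ha.1, by linarith [ha.2]⟩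
  have h := Complex.hasSum_re (hasSum_odd ha' hσ)
  simp only [Complex.ofReal_re] at h
  have hp : ∀ n : ℕ, 0 < (((n : ℝ) + a) ^ (-σ) - (n + 1 - a) ^ (-σ)) / 2 := by
    intro n
    have hn : (0 : ℝ) ≤ n := Nat.cast_nonneg n
    have := Real.rpow_lt_rpow_of_neg (x := n + a) (y := n + 1 - a) (z := -σ) (by linarith [ha.1])
      (by linarith [ha.2]) (by linarith)
    linarith
  rw [← h.tsum_eq]
  exact h.summable.tsum_pos (fun n => (hp n).le) 0 (hp 0)

lemma hasDerivAt_even_gt {a : ℝ} (ha : a ∈ Set.Ioo (0 : ℝ) (1 / 2)) {σ : ℝ} (hσ : 1 < σ) :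
    HasDerivAt (fun b : ℝ => hurwitzZetaEven b (σ : ℂ)) (-σ * hurwitzZetaOdd a ((σ : ℂ) + 1)) a := by
  have hsub : Set.Ioo (a / 2) (1 / 2) ⊆ Set.Ioo (0 : ℝ) 1 := fun x hx =>
    ⟨by linarith [hx.1, ha.1], by linarith [hx.2]⟩
  have hat : a ∈ Set.Ioo (a / 2) (1 / 2) := ⟨by linarith [ha.1], ha.2⟩
  have hu : Summable fun n : ℕ => σ * (((n : ℝ) + a / 2) ^ (-σ - 1)) := by
    apply Summable.mul_left
    have := (Real.summable_one_div_nat_add_rpow (a / 2) (σ + 1)).mpr (by linarith)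
    refine this.congr fun n => ?_
    have hn : (0 : ℝ) ≤ n := Nat.cast_nonneg n
    have : 0 < (n : ℝ) + a / 2 := by linarith [ha.1]
    rw [abs_of_pos this, show -σ - 1 = -(σ + 1) by ring, Real.rpow_neg this.le, one_div]
  have key := hasDerivAt_tsum_of_isPreconnected (𝕜 := ℝ)
    (g := fun (n : ℕ) (b : ℝ) => (((n : ℝ) + b) ^ (-σ) + (n + 1 - b) ^ (-σ)) / 2)
    (g' := fun (n : ℕ) (b : ℝ) => -σ * ((((n : ℝ) + b) ^ (-σ - 1) - (n + 1 - b) ^ (-σ - 1)) / 2))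
    (y₀ := a) (y := a) hu isOpen_Ioo (isPreconnected_Ioo (a := a / 2) (b := 1 / 2)) ?_ ?_ hat ?_ hat
  · have hd := key.ofReal_comp
    refine (hd.congr_of_eventuallyEq ?_).congr_deriv ?_
    · filter_upwards [isOpen_Ioo.mem_nhds hat] with b hb
      rw [Complex.ofReal_tsum]
      exact (hasSum_even (hsub hb) hσ).tsum_eq.symm
    · have := (hasSum_odd (hsub hat) (σ := σ + 1) (by linarith)).tsum_eq
      rw [← Complex.ofReal_tsum] at this
      push_cast at this
      rw [tsum_mul_left, ← this]
      push_cast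
      simp only [neg_add, ← sub_eq_add_neg]
  · intro n y hy
    have hn : (0 : ℝ) ≤ n := Nat.cast_nonneg n
    have h1 : (n : ℝ) + y ≠ 0 := by linarith [(hsub hy).1]
    have h2 : (n : ℝ) + 1 - y ≠ 0 := by linarith [(hsub hy).2]
    have d1 := ((hasDerivAt_id y).const_add (n : ℝ)).rpow_const (p := -σ) (Or.inl h1)
    have d2 := ((hasDerivAt_id y).const_sub ((n : ℝ) + 1)).rpow_const (p := -σ) (Or.inl h2)
    refine ((d1.add d2).div_const 2).congr_deriv ?_
    simp only [id]
    ring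
  · intro n y hy
    have hn : (0 : ℝ) ≤ n := Nat.cast_nonneg n
    have ha0 := ha.1
    have hy1 := hy.1
    have hy2 := hy.2
    have b1 : ((n : ℝ) + y) ^ (-σ - 1) ≤ (n + a / 2) ^ (-σ - 1) :=
      Real.rpow_le_rpow_of_nonpos (by linarith) (by linarith) (by linarith)
    have b2 : ((n : ℝ) + 1 - y) ^ (-σ - 1) ≤ (n + a / 2) ^ (-σ - 1) :=
      Real.rpow_le_rpow_of_nonpos (by linarith) (by linarith) (by linarith)
    have p1 : 0 < ((n : ℝ) + y) ^ (-σ - 1) := Real.rpow_pos_of_pos (by linarith) _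
    have p2 : 0 < ((n : ℝ) + 1 - y) ^ (-σ - 1) := Real.rpow_pos_of_pos (by linarith) _
    rw [norm_mul, norm_neg, Real.norm_of_nonneg (by linarith : 0 ≤ σ), Real.norm_eq_abs]
    gcongr
    rw [abs_le]
    constructor <;> linarith
  · have := Complex.hasSum_re (hasSum_even (hsub hat) hσ)
    simp only [Complex.ofReal_re] at this
    exact this.summable

lemma ofReal_ne_neg_nat {s : ℝ} (hs : 0 < s) (n : ℕ) : (s : ℂ) ≠ -n := by
  intro h
  have := congrArg Complex.re h
  simp at this
  have hn : (0 : ℝ) ≤ n := Nat.cast_nonneg n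
  linarith

lemma hasDerivAt_even_lt {a : ℝ} (ha : a ∈ Set.Ioo (0 : ℝ) (1 / 2)) {σ : ℝ} (hσ : 0 < σ) (hσ1 : σ < 1) :
    HasDerivAt (fun b : ℝ => hurwitzZetaEven b (σ : ℂ)) (-σ * hurwitzZetaOdd a ((σ : ℂ) + 1)) a := by
  have ha' : a ∈ Set.Ioo (0 : ℝ) 1 := ⟨ha.1, by linarith [ha.2]⟩
  have hs : 0 < 1 - σ := by linarith
  have e1 : (fun b : ℝ => hurwitzZetaEven b (σ : ℂ)) = fun b : ℝ =>
      2 * (2 * Real.pi) ^ (-((1 - σ : ℝ) : ℂ)) * Complex.Gamma ((1 - σ : ℝ) : ℂ) *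
        Complex.cos (Real.pi * ((1 - σ : ℝ) : ℂ) / 2) * cosZeta b ((1 - σ : ℝ) : ℂ) := by
    ext b
    rw [← hurwitzZetaEven_one_sub _ (ofReal_ne_neg_nat hs)]
    · congr 1; push_cast; ring
    · right; norm_cast; linarith
  rw [e1]
  refine ((hasDerivAt_cosZeta ha' hs).const_mul _).congr_deriv ?_
  have e2 := sinZeta_one_sub (a : UnitAddCircle) (s := ((σ + 1 : ℝ) : ℂ)) (ofReal_ne_neg_nat (by linarith))
  rw [show ((1 - σ : ℝ) : ℂ) - 1 = 1 - ((σ + 1 : ℝ) : ℂ) by push_cast; ring, e2]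
  push_cast
  have hσ0 : (σ : ℂ) ≠ 0 := by exact_mod_cast hσ.ne'
  have hpi : (Real.pi : ℂ) ≠ 0 := by exact_mod_cast Real.pi_ne_zero
  rw [Complex.Gamma_add_one _ hσ0]
  have hG := Complex.Gamma_mul_Gamma_one_sub (σ : ℂ)
  have hsn : Complex.sin (Real.pi * σ) ≠ 0 := by
    rw [← Complex.ofReal_mul, ← Complex.ofReal_sin]
    exact_mod_cast (Real.sin_pos_of_pos_of_lt_pi (mul_pos Real.pi_pos hσ)
      (by nlinarith [Real.pi_pos])).ne'
  have hp : (2 * (Real.pi : ℂ)) ^ (-(1 - (σ : ℂ))) * (2 * (Real.pi : ℂ)) ^ (-((σ : ℂ) + 1)) =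
      ((2 * (Real.pi : ℂ)) ^ 2)⁻¹ := by
    rw [← Complex.cpow_add _ _ (by simp [hpi]), show -(1 - (σ : ℂ)) + -((σ : ℂ) + 1) = -2 by ring,
      Complex.cpow_neg]
    norm_cast
  have c1 : Complex.cos (Real.pi * (1 - (σ : ℂ)) / 2) = Complex.sin (Real.pi * σ / 2) := by
    rw [← Complex.cos_pi_div_two_sub]; congr 1; ring
  have c2 : Complex.sin (Real.pi * ((σ : ℂ) + 1) / 2) = Complex.cos (Real.pi * σ / 2) := by
    rw [← Complex.sin_add_pi_div_two]; congr 1; ring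
  have c3 : Complex.sin (Real.pi * σ) =
      2 * Complex.sin (Real.pi * σ / 2) * Complex.cos (Real.pi * σ / 2) := by
    rw [← Complex.sin_two_mul]; congr 1; ring
  rw [c1, c2]
  rw [eq_div_iff hsn, c3] at hG
  generalize Complex.sin (Real.pi * σ / 2) = S at *
  generalize Complex.cos (Real.pi * σ / 2) = C at *
  generalize Complex.Gamma (σ : ℂ) = G at *
  generalize Complex.Gamma (1 - (σ : ℂ)) = G' at *
  generalize (2 * (Real.pi : ℂ)) ^ (-(1 - (σ : ℂ))) = A at *
  generalize (2 * (Real.pi : ℂ)) ^ (-((σ : ℂ) + 1)) = B at *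
  generalize hurwitzZetaOdd a ((σ : ℂ) + 1) = Z
  calc _ = -(2 * Real.pi) * 2 * (A * B) * (G * G' * (2 * S * C)) * σ * Z := by ring
    _ = _ := by rw [hp, hG]; field_simp

lemma hasDerivAt_even {a : ℝ} (ha : a ∈ Set.Ioo (0 : ℝ) (1 / 2)) {σ : ℝ} (hσ : 0 < σ) (hσ1 : σ ≠ 1) :
    HasDerivAt (fun b : ℝ => hurwitzZetaEven b (σ : ℂ)) (-σ * hurwitzZetaOdd a ((σ : ℂ) + 1)) a := by
  rcases lt_or_gt_of_ne hσ1 with h | h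
  · exact hasDerivAt_even_lt ha hσ h
  · exact hasDerivAt_even_gt ha h

lemma coe_one_sub (a : ℝ) : ((1 - a : ℝ) : UnitAddCircle) = -(a : UnitAddCircle) := by
  rw [AddCircle.coe_sub, AddCircle.coe_period, zero_sub]

lemma Zf_eq (a : ℝ) (s : ℂ) : Zf a s = 2 * hurwitzZetaEven a s := by
  rw [Zf, coe_one_sub, hurwitzZetaEven_eq]; ring

lemma Yf_eq (a : ℝ) (s : ℂ) : Yf a s = 2 * hurwitzZetaOdd a s := by
  rw [Yf, coe_one_sub, hurwitzZetaOdd_eq]; ring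

lemma Pf_eq (a : ℝ) (s : ℂ) : Pf a s = 2 * cosZeta a s := by
  rw [Pf, coe_one_sub, cosZeta_eq]; ring

lemma Og_eq (a : ℝ) (s : ℂ) : Og a s = 2 * sinZeta a s := by
  have h : -I * (2 * I) = (2 : ℂ) := by linear_combination (-2) * Complex.I_mul_I
  rw [Og, coe_one_sub, sinZeta_eq]
  field_simp
  linear_combination (-expZeta a s + expZeta (-a) s) * Complex.I_sq

lemma strictAnti_of_hasDeriv {f f' : ℝ → ℝ} (h : ∀ a ∈ Set.Ioo (0 : ℝ) (1 / 2), HasDerivAt f (f' a) a ∧ f' a < 0) :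
    StrictAntiOn f (Set.Ioo 0 (1 / 2)) := by
  refine strictAntiOn_of_deriv_neg (convex_Ioo _ _)
    (fun a ha => (h a ha).1.continuousAt.continuousWithinAt) ?_
  intro a ha
  rw [interior_Ioo] at ha
  rw [(h a ha).1.deriv]
  exact (h a ha).2

lemma hasDerivAt_re {f : ℝ → ℂ} {f' : ℂ} {a : ℝ} (h : HasDerivAt f f' a) :
    HasDerivAt (fun b => (f b).re) f'.re a :=
  Complex.reCLM.hasFDerivAt.comp_hasDerivAt a h


/-- for fixed `σ > 0`, the map `a ↦ Z(σ,a)` (for `σ ≠ 1`) has derivative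
`−σ·Y(σ+1,a) < 0` at each `a ∈ (0,1/2)`, and `a ↦ P(σ,a)` has derivative
`−2π·O(σ−1,a) < 0` there; in particular both maps are strictly decreasing on `(0,1/2)`. -/
theorem Z_P_strictAnti_in_a (σ : ℝ) (hσ : 0 < σ) :
    (σ ≠ 1 → ∀ a ∈ Set.Ioo (0 : ℝ) (1 / 2),
      HasDerivAt (fun b : ℝ => (Zf b (σ : ℂ)).re) (-σ * (Yf a ((σ : ℂ) + 1)).re) a ∧
      -σ * (Yf a ((σ : ℂ) + 1)).re < 0) ∧
    (∀ a ∈ Set.Ioo (0 : ℝ) (1 / 2),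
      HasDerivAt (fun b : ℝ => (Pf b (σ : ℂ)).re)
        (-(2 * Real.pi) * (Og a ((σ : ℂ) - 1)).re) a ∧
      -(2 * Real.pi) * (Og a ((σ : ℂ) - 1)).re < 0) ∧
    (σ ≠ 1 → StrictAntiOn (fun a : ℝ => (Zf a (σ : ℂ)).re) (Set.Ioo 0 (1 / 2))) ∧
    StrictAntiOn (fun a : ℝ => (Pf a (σ : ℂ)).re) (Set.Ioo 0 (1 / 2)) := by
  have hZ : σ ≠ 1 → ∀ a ∈ Set.Ioo (0 : ℝ) (1 / 2),
      HasDerivAt (fun b : ℝ => (Zf b (σ : ℂ)).re) (-σ * (Yf a ((σ : ℂ) + 1)).re) a ∧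
      -σ * (Yf a ((σ : ℂ) + 1)).re < 0 := by
    intro h1 a ha
    have hp := odd_pos ha (σ := σ + 1) (by linarith)
    push_cast at hp
    have hY : (Yf a ((σ : ℂ) + 1)).re = 2 * (hurwitzZetaOdd a ((σ : ℂ) + 1)).re := by
      rw [Yf_eq]; simp
    refine ⟨?_, ?_⟩
    · have := hasDerivAt_re ((hasDerivAt_even ha hσ h1).const_mul (2 : ℂ))
      simp only [Zf_eq]
      refine this.congr_deriv ?_
      rw [hY, ← Complex.ofReal_neg, ← mul_assoc, mul_comm (2 : ℂ), mul_assoc, Complex.re_ofReal_mul]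
      simp
    · rw [hY]; nlinarith
  have hP : ∀ a ∈ Set.Ioo (0 : ℝ) (1 / 2),
      HasDerivAt (fun b : ℝ => (Pf b (σ : ℂ)).re)
        (-(2 * Real.pi) * (Og a ((σ : ℂ) - 1)).re) a ∧
      -(2 * Real.pi) * (Og a ((σ : ℂ) - 1)).re < 0 := by
    intro a ha
    have hp := sinZeta_pos ha hσ
    have hY : (Og a ((σ : ℂ) - 1)).re = 2 * (sinZeta a ((σ : ℂ) - 1)).re := by
      rw [Og_eq]; simp
    refine ⟨?_, ?_⟩
    · have := hasDerivAt_re ((hasDerivAt_cosZeta ⟨ha.1, by linarith [ha.2]⟩ hσ).const_mul (2 : ℂ))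
      simp only [Pf_eq]
      refine this.congr_deriv ?_
      rw [hY, show (2 : ℂ) * (-(2 * Real.pi) * sinZeta a ((σ : ℂ) - 1)) =
        ((-(2 * Real.pi) * 2 : ℝ) : ℂ) * sinZeta a ((σ : ℂ) - 1) by push_cast; ring,
        Complex.re_ofReal_mul]
      ring
    · rw [hY]; nlinarith [mul_pos Real.pi_pos hp]
  exact ⟨hZ, hP, fun h1 => strictAnti_of_hasDeriv (hZ h1), strictAnti_of_hasDeriv hP⟩
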